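/- Let R ⊂ A be a split Frobenius extension of rings. Then A is Gorenstein regular if and only if R is Gorenstein regular; that is, every projective left A-module has finite injective dimension and every injective left A-module has finite projective dimension if and only if the same two conditions hold over R. -/

import Mathlib

universe u

section Frobenius

variable {R A : Type u} [Ring R] [Ring A]

/-- A ring extension `ι : R →+* A` (an injective ring homomorphism) is a Frobenius extension
if there is an `R`-`R`-bimodule homomorphism `τ : A → R` together with dual bases
`x i`, `y i` in `A`. -/
def IsFrobeniusExtension (ι : R →+* A) : Prop :=
  Function.Injective ι ∧
  ∃ (τ : A →+ R) (n : ℕ) (x y : Fin n → A),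
    (∀ (r : R) (a : A), τ (ι r * a) = r * τ a) ∧
    (∀ (a : A) (r : R), τ (a * ι r) = τ a * r) ∧
    (∀ a : A, ∑ i, x i * ι (τ (y i * a)) = a) ∧
    (∀ a : A, ∑ i, ι (τ (a * x i)) * y i = a)

/-- A ring extension `ι : R →+* A` is split if `R` is a direct summand of `A` as an
`R`-`R`-bimodule, i.e. there is an `R`-`R`-bimodule homomorphism `π : A → R` with
`π ∘ ι = id`. -/
def IsSplitExtension (ι : R →+* A) : Prop :=
  ∃ π : A →+ R,
    (∀ (r : R) (a : A), π (ι r * a) = r * π a) ∧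
    (∀ (a : A) (r : R), π (a * ι r) = π a * r) ∧
    (∀ r : R, π (ι r) = r)

end Frobenius

/-- `pdimLE R n M` means that `M` admits a projective resolution of length `n`. -/
def pdimLE (R : Type u) [Ring R] : ℕ → ModuleCat.{u} R → Prop
  | 0, M => Module.Projective R M
  | n + 1, M => ∃ (G : ModuleCat.{u} R) (f : G →ₗ[R] M),
      Function.Surjective f ∧ Module.Projective R G ∧
      pdimLE R n (ModuleCat.of R ↥(LinearMap.ker f))

/-- The projective dimension of a left `R`-module, in `ℕ∞`. -/
noncomputable def pdim (R : Type u) [Ring R] (M : ModuleCat.{u} R) : ℕ∞ :=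
  sInf {k : ℕ∞ | ∃ n : ℕ, k = (n : ℕ∞) ∧ pdimLE R n M}

/-- `idimLE R n M` means that `M` admits an injective coresolution of length `n`. -/
def idimLE (R : Type u) [Ring R] : ℕ → ModuleCat.{u} R → Prop
  | 0, M => Module.Injective R M
  | n + 1, M => ∃ (G : ModuleCat.{u} R) (f : M →ₗ[R] G),
      Function.Injective f ∧ Module.Injective R G ∧
      idimLE R n (ModuleCat.of R (↥G ⧸ LinearMap.range f))

/-- The injective dimension of a left `R`-module, in `ℕ∞`. -/
noncomputable def idim (R : Type u) [Ring R] (M : ModuleCat.{u} R) : ℕ∞ :=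
  sInf {k : ℕ∞ | ∃ n : ℕ, k = (n : ℕ∞) ∧ idimLE R n M}

/-!
Along a Frobenius extension `ι : R →+* A`, coextension of scalars `Hom_R(A, -)` is both right and
left adjoint to restriction. Two functors that are adjoint to each other on both sides are exact and
preserve projectives and injectives, so neither of them turns a finite projective or injective
dimension into an infinite one. If moreover `G` is faithful, then every projective `P` is a retract
of `F G P` through the counit of `F ⊣ G` and every injective `I` is a retract of `F G I` through the
unit of `G ⊣ F`, so Gorenstein regularity passes from the source of `F` to its target. Restriction
of scalars is always faithful; coextension is faithful when the extension splits, because then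
evaluation at `1` is surjective onto every `R`-module. Both directions are therefore instances of
the same argument.
-/

section Dimension

open CategoryTheory Limits

variable {C D : Type*} [Category* C] [Abelian C] [Category* D] [Abelian D]

theorem hasProjectiveDimensionLE_obj [EnoughProjectives C] (F : C ⥤ D)
    [F.PreservesZeroMorphisms] [PreservesFiniteLimits F] [PreservesFiniteColimits F]
    [F.PreservesProjectiveObjects] (n : ℕ) (X : C) [HasProjectiveDimensionLE X n] :
    HasProjectiveDimensionLE (F.obj X) n := by
  induction n generalizing X with
  | zero =>
    have : Projective X := (projective_iff_hasProjectiveDimensionLE_zero X).2 ‹_›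
    exact (projective_iff_hasProjectiveDimensionLE_zero _).1 inferInstance
  | succ n ih =>
    let ⟨p⟩ := EnoughProjectives.presentation X
    have hS : (ShortComplex.mk _ _ (kernel.condition p.f)).ShortExact :=
      { exact := ShortComplex.exact_kernel p.f }
    have : HasProjectiveDimensionLE (kernel p.f) n :=
      (hS.hasProjectiveDimensionLT_X₃_iff n p.projective).1 ‹_›
    exact ((hS.map_of_exact F).hasProjectiveDimensionLT_X₃_iff n
      (F.projective_obj_of_projective p.projective)).2 (ih (kernel p.f))

theorem hasInjectiveDimensionLE_obj [EnoughInjectives C] (F : C ⥤ D)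
    [F.PreservesZeroMorphisms] [PreservesFiniteLimits F] [PreservesFiniteColimits F]
    [F.PreservesInjectiveObjects] (n : ℕ) (X : C) [HasInjectiveDimensionLE X n] :
    HasInjectiveDimensionLE (F.obj X) n := by
  induction n generalizing X with
  | zero =>
    have : Injective X := injective_iff_hasInjectiveDimensionLT_one.2 ‹_›
    exact injective_iff_hasInjectiveDimensionLT_one.1 inferInstance
  | succ n ih =>
    let ⟨p⟩ := EnoughInjectives.presentation X
    have hS : (ShortComplex.mk _ _ (cokernel.condition p.f)).ShortExact :=
      { exact := ShortComplex.exact_cokernel p.f }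
    have : HasInjectiveDimensionLE (cokernel p.f) n :=
      (hS.hasInjectiveDimensionLT_X₃_iff n p.injective).2 ‹_›
    exact ((hS.map_of_exact F).hasInjectiveDimensionLT_X₃_iff n
      (F.injective_obj_of_injective p.injective)).1 (ih (cokernel p.f))

theorem projectiveDimension_obj_ne_top [EnoughProjectives C] {F : C ⥤ D} {G : D ⥤ C}
    (adj : F ⊣ G) (adj' : G ⊣ F) {X : C} (hX : projectiveDimension X ≠ ⊤) :
    projectiveDimension (F.obj X) ≠ ⊤ := by
  have := adj.isLeftAdjoint
  have := adj'.isRightAdjoint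
  have := adj'.isLeftAdjoint
  have : F.PreservesProjectiveObjects := ⟨adj.map_projective _⟩
  obtain ⟨n, _⟩ := (projectiveDimension_ne_top_iff X).1 hX
  exact (projectiveDimension_ne_top_iff _).2 ⟨n, hasProjectiveDimensionLE_obj F n X⟩

theorem injectiveDimension_obj_ne_top [EnoughInjectives C] {F : C ⥤ D} {G : D ⥤ C}
    (adj : F ⊣ G) (adj' : G ⊣ F) {X : C} (hX : injectiveDimension X ≠ ⊤) :
    injectiveDimension (F.obj X) ≠ ⊤ := by
  have := adj.isLeftAdjoint
  have := adj'.isRightAdjoint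
  have := adj.isRightAdjoint
  have : F.PreservesInjectiveObjects := ⟨adj'.map_injective _⟩
  obtain ⟨n, _⟩ := (injectiveDimension_ne_top_iff X).1 hX
  exact (injectiveDimension_ne_top_iff _).2 ⟨n, hasInjectiveDimensionLE_obj F n X⟩

end Dimension

section GorensteinRegular

open CategoryTheory

/-- An abelian category is Gorenstein regular if its projective objects have finite injective
dimension and its injective objects have finite projective dimension. The dimensions are bounded
object by object; over a ring this gives uniform bounds, since projective modules are closed under
direct sums and injective modules under products. -/
def IsGorensteinRegular (C : Type*) [Category* C] [Abelian C] : Prop :=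
  (∀ P : C, Projective P → injectiveDimension P ≠ ⊤) ∧
    ∀ I : C, Injective I → projectiveDimension I ≠ ⊤

variable {C D : Type*} [Category* C] [Abelian C] [Category* D] [Abelian D]
  [EnoughProjectives C] [EnoughInjectives C] {F : C ⥤ D} {G : D ⥤ C}

theorem IsGorensteinRegular.of_faithful (adj : F ⊣ G) (adj' : G ⊣ F) [G.Faithful]
    (hC : IsGorensteinRegular C) : IsGorensteinRegular D := by
  have := adj.isLeftAdjoint
  have := adj.isRightAdjoint
  have := adj'.isLeftAdjoint
  have := adj'.isRightAdjoint
  refine ⟨fun P hP => ?_, fun I hI => ?_⟩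
  · let retract : Retract P (F.obj (G.obj P)) :=
      { i := Projective.factorThru (𝟙 P) (adj.counit.app P)
        r := adj.counit.app P }
    have hGP := hC.1 _ (adj'.map_projective P hP)
    exact ne_top_of_le_ne_top (injectiveDimension_obj_ne_top adj adj' hGP)
      retract.injectiveDimension_le
  · let retract : Retract I (F.obj (G.obj I)) :=
      { i := adj'.unit.app I
        r := Injective.factorThru (𝟙 I) (adj'.unit.app I) }
    have hGI := hC.2 _ (adj.map_injective I hI)
    exact ne_top_of_le_ne_top (projectiveDimension_obj_ne_top adj adj' hGI)
      retract.projectiveDimension_le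

theorem isGorensteinRegular_iff_of_faithful [EnoughProjectives D] [EnoughInjectives D]
    (adj : F ⊣ G) (adj' : G ⊣ F) [F.Faithful] [G.Faithful] :
    IsGorensteinRegular C ↔ IsGorensteinRegular D :=
  ⟨.of_faithful adj adj', .of_faithful adj' adj⟩

end GorensteinRegular

section FrobeniusSystem

open CategoryTheory

universe u₁ u₂ v

variable {R : Type u₁} {A : Type u₂} [Ring R] [Ring A] {ι : R →+* A}

/-- An additive map `φ : A → R` with `φ (ι r * a) = r * φ a`, as a functional on the left
`R`-module `A`. -/
def leftLinearFunctional (φ : A →+ R) (hφ : ∀ r a, φ (ι r * a) = r * φ a) :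
    (ModuleCat.restrictScalars ι).obj (ModuleCat.of A A) →ₗ[R] R :=
  { φ with map_smul' := hφ }

theorem faithful_coextendScalars {π : A →+ R} (hπ : ∀ r a, π (ι r * a) = r * π a)
    (hπ_one : π 1 = 1) : (ModuleCat.coextendScalars.{u₁, u₂, max v u₂} ι).Faithful := by
  let adj := ModuleCat.restrictCoextendScalarsAdj.{v, u₁, u₂} ι
  have (N : ModuleCat.{max v u₂} R) : Epi (adj.counit.app N) := by
    refine (ModuleCat.epi_iff_surjective _).2 fun m => ?_
    refine ⟨(leftLinearFunctional π hπ).smulRight m, ?_⟩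
    change π 1 • m = m
    rw [hπ_one, one_smul]
  exact adj.faithful_R_of_epi_counit_app

theorem coextendScalars_apply_mul {N : ModuleCat.{v} R} (g : (ModuleCat.coextendScalars ι).obj N)
    (r : R) (a : A) : g (ι r * a) = r • g a :=
  (ModuleCat.CoextendScalars.equiv ι N g).map_smul r a

/-- A Frobenius system for `ι : R →+* A`: the Frobenius homomorphism `τ` and the dual bases `x`, `y`
witnessing that `ι` is a Frobenius extension, with the index set of the bases left arbitrary. -/
structure FrobeniusSystem (ι : R →+* A) (κ : Type*) [Fintype κ] where
  τ : A →+ R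
  x : κ → A
  y : κ → A
  map_mul_left (r : R) (a : A) : τ (ι r * a) = r * τ a
  map_mul_right (a : A) (r : R) : τ (a * ι r) = τ a * r
  sum_mul_map (a : A) : ∑ i, x i * ι (τ (y i * a)) = a
  sum_map_mul (a : A) : ∑ i, ι (τ (a * x i)) * y i = a

namespace FrobeniusSystem

variable {κ : Type*} [Fintype κ] (𝓕 : FrobeniusSystem ι κ)

theorem coextendScalars_apply {N : ModuleCat.{v} R} (g : (ModuleCat.coextendScalars ι).obj N)
    (a : A) : g a = ∑ i, 𝓕.τ (a * 𝓕.x i) • g (𝓕.y i) := by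
  calc g a = g (∑ i, ι (𝓕.τ (a * 𝓕.x i)) * 𝓕.y i : A) := by rw [𝓕.sum_map_mul]
    _ = ∑ i, g (ι (𝓕.τ (a * 𝓕.x i)) * 𝓕.y i : A) :=
      map_sum (ModuleCat.CoextendScalars.equiv ι N g) _ _
    _ = ∑ i, 𝓕.τ (a * 𝓕.x i) • g (𝓕.y i) := by simp only [coextendScalars_apply_mul]

/-- The unit `N → Hom_R(A, N)`, `m ↦ (a ↦ τ a • m)`, of the adjunction making coextension left
adjoint to restriction of scalars. -/
noncomputable def unit (N : ModuleCat.{max v u₂} R) :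
    N ⟶ (ModuleCat.restrictScalars ι).obj ((ModuleCat.coextendScalars ι).obj N) :=
  ModuleCat.ofHom (Y := (ModuleCat.restrictScalars ι).obj ((ModuleCat.coextendScalars ι).obj N))
    { toFun m := (leftLinearFunctional 𝓕.τ 𝓕.map_mul_left).smulRight m
      map_add' m m' := LinearMap.ext fun a : A => smul_add (𝓕.τ a) m m'
      map_smul' r m := LinearMap.ext fun a : A => by
        change 𝓕.τ a • r • m = 𝓕.τ (a * ι r) • m
        rw [𝓕.map_mul_right, mul_smul] }

theorem sum_smul_smul_apply {M : ModuleCat.{v} A}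
    (g : (ModuleCat.coextendScalars ι).obj ((ModuleCat.restrictScalars ι).obj M)) (a : A) :
    ∑ i, 𝓕.x i • (show M from (a • g) (𝓕.y i)) =
      a • ∑ i, 𝓕.x i • (show M from g (𝓕.y i)) := by
  let v (i : κ) : M := g (𝓕.y i)
  calc ∑ i, 𝓕.x i • (show M from g (𝓕.y i * a : A))
    _ = ∑ i, 𝓕.x i • ∑ j, ι (𝓕.τ (𝓕.y i * a * 𝓕.x j)) • v j :=
      Finset.sum_congr rfl fun i _ =>
        congrArg (𝓕.x i • ·) (𝓕.coextendScalars_apply g (𝓕.y i * a))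
    _ = ∑ j, (∑ i, 𝓕.x i * ι (𝓕.τ (𝓕.y i * (a * 𝓕.x j)))) • v j := by
      simp only [Finset.smul_sum, Finset.sum_smul, smul_smul, mul_assoc]
      exact Finset.sum_comm
    _ = a • ∑ j, 𝓕.x j • v j := by
      simp only [𝓕.sum_mul_map, Finset.smul_sum, smul_smul]

/-- The counit `Hom_R(A, M) → M`, `g ↦ ∑ i, x i • g (y i)`, of the adjunction making coextension
left adjoint to restriction of scalars. -/
noncomputable def counit (M : ModuleCat.{max v u₂} A) :
    (ModuleCat.coextendScalars ι).obj ((ModuleCat.restrictScalars ι).obj M) ⟶ M :=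
  ModuleCat.ofHom
    { toFun g := ∑ i, 𝓕.x i • (show M from g (𝓕.y i))
      map_add' g g' := by
        rw [← Finset.sum_add_distrib]
        exact Finset.sum_congr rfl fun i _ => smul_add (𝓕.x i) (_ : M) _
      map_smul' a g := 𝓕.sum_smul_smul_apply g a }

theorem counit_naturality {M M' : ModuleCat.{max v u₂} A} (f : M ⟶ M') :
    (ModuleCat.coextendScalars ι).map ((ModuleCat.restrictScalars ι).map f) ≫ 𝓕.counit M' =
      𝓕.counit M ≫ f := by
  ext g
  let v (i : κ) : M := g (𝓕.y i)
  change ∑ i, 𝓕.x i • f.hom (v i) = f.hom (∑ i, 𝓕.x i • v i)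
  simp only [map_sum, map_smul]

theorem map_unit_comp_counit (N : ModuleCat.{max v u₂} R) :
    (ModuleCat.coextendScalars ι).map (𝓕.unit N) ≫
      𝓕.counit ((ModuleCat.coextendScalars ι).obj N) = 𝟙 _ := by
  ext g (a : A)
  let v (i : κ) : (ModuleCat.coextendScalars ι).obj N := (𝓕.unit N).hom (g (𝓕.y i))
  calc ModuleCat.CoextendScalars.equiv ι N (∑ i, 𝓕.x i • v i) a
    _ = ∑ i, (𝓕.x i • v i) a := by
      rw [map_sum]
      exact LinearMap.sum_apply _ _ _
    _ = ∑ i, 𝓕.τ (a * 𝓕.x i) • g (𝓕.y i) := rfl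
    _ = g a := (𝓕.coextendScalars_apply g a).symm

theorem unit_comp_map_counit (M : ModuleCat.{max v u₂} A) :
    𝓕.unit ((ModuleCat.restrictScalars ι).obj M) ≫
      (ModuleCat.restrictScalars ι).map (𝓕.counit M) = 𝟙 _ := by
  ext m
  let m' : M := m
  change ∑ i, 𝓕.x i • ι (𝓕.τ (𝓕.y i)) • m' = m'
  calc ∑ i, 𝓕.x i • ι (𝓕.τ (𝓕.y i)) • m'
    _ = (∑ i, 𝓕.x i * ι (𝓕.τ (𝓕.y i * 1))) • m' := by
      simp only [mul_one, Finset.sum_smul, mul_smul]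
    _ = m' := by rw [𝓕.sum_mul_map, one_smul]

/-- Along a Frobenius extension, coextension of scalars is left adjoint to restriction, in addition
to being right adjoint to it by `ModuleCat.restrictCoextendScalarsAdj`. -/
noncomputable def coextendRestrictScalarsAdj :
    ModuleCat.coextendScalars.{u₁, u₂, max v u₂} ι ⊣ ModuleCat.restrictScalars.{max v u₂} ι :=
  Adjunction.mkOfUnitCounit
    { unit :=
        { app := 𝓕.unit
          naturality N N' f := by
            ext m
            exact ModuleCat.CoextendScalars.ext <| LinearMap.ext fun a : A =>
              (f.hom.map_smul (𝓕.τ a) m).symm }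
      counit :=
        { app := 𝓕.counit
          naturality _ _ := 𝓕.counit_naturality }
      left_triangle := by
        ext N : 2
        exact 𝓕.map_unit_comp_counit N
      right_triangle := by
        ext M : 2
        exact 𝓕.unit_comp_map_counit M }

end FrobeniusSystem

end FrobeniusSystem

section Modules

open CategoryTheory

universe v

theorem shortExact_mkQ_range {R : Type*} [Ring R] {M N : Type v} [AddCommGroup M] [Module R M]
    [AddCommGroup N] [Module R N] {f : M →ₗ[R] N} (hf : Function.Injective f) :
    (ModuleCat.shortComplexOfCompEqZero f f.range.mkQ
      f.exact_map_mkQ_range.linearMap_comp_eq_zero).ShortExact :=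
  ModuleCat.shortComplex_shortExact _ f.exact_map_mkQ_range hf (Submodule.mkQ_surjective _)

variable {R : Type u} [Ring R]

theorem pdimLE_iff_hasProjectiveDimensionLE {n : ℕ} {M : ModuleCat.{u} R} :
    pdimLE R n M ↔ HasProjectiveDimensionLE M n := by
  induction n generalizing M with
  | zero =>
    exact (IsProjective.iff_projective M).trans
      (projective_iff_hasProjectiveDimensionLE_zero M)
  | succ n ih =>
    simp only [pdimLE, ih]
    constructor
    · rintro ⟨G, f, hf, hG, hker⟩
      exact ((LinearMap.shortExact_shortComplexKer hf).hasProjectiveDimensionLT_X₃_iff n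
        ((IsProjective.iff_projective G).1 hG)).2 hker
    · intro hM
      let ⟨p⟩ := EnoughProjectives.presentation M
      have hf : Function.Surjective p.f.hom := (ModuleCat.epi_iff_surjective p.f).1 p.epi
      exact ⟨p.p, p.f.hom, hf, (IsProjective.iff_projective p.p).2 p.projective,
        ((LinearMap.shortExact_shortComplexKer hf).hasProjectiveDimensionLT_X₃_iff n
          p.projective).1 hM⟩

theorem idimLE_iff_hasInjectiveDimensionLE {n : ℕ} {M : ModuleCat.{u} R} :
    idimLE R n M ↔ HasInjectiveDimensionLE M n := by
  induction n generalizing M with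
  | zero =>
    exact (Module.injective_iff_injective_object R M).trans
      injective_iff_hasInjectiveDimensionLT_one
  | succ n ih =>
    simp only [idimLE, ih]
    constructor
    · rintro ⟨G, f, hf, hG, hcoker⟩
      exact ((shortExact_mkQ_range hf).hasInjectiveDimensionLT_X₃_iff n
        ((Module.injective_iff_injective_object R G).1 hG)).1 hcoker
    · intro hM
      let ⟨p⟩ := EnoughInjectives.presentation M
      have hf : Function.Injective p.f.hom := (ModuleCat.mono_iff_injective p.f).1 p.mono
      exact ⟨p.J, p.f.hom, hf, (Module.injective_iff_injective_object R p.J).2 p.injective,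
        ((shortExact_mkQ_range hf).hasInjectiveDimensionLT_X₃_iff n p.injective).2 hM⟩

theorem pdim_ne_top_iff {M : ModuleCat.{u} R} : pdim R M ≠ ⊤ ↔ projectiveDimension M ≠ ⊤ := by
  rw [projectiveDimension_ne_top_iff, pdim, ne_eq, sInf_eq_top]
  simp [pdimLE_iff_hasProjectiveDimensionLE]

theorem idim_ne_top_iff {M : ModuleCat.{u} R} : idim R M ≠ ⊤ ↔ injectiveDimension M ≠ ⊤ := by
  rw [injectiveDimension_ne_top_iff, idim, ne_eq, sInf_eq_top]
  simp [idimLE_iff_hasInjectiveDimensionLE]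

theorem isGorensteinRegular_moduleCat_iff :
    IsGorensteinRegular (ModuleCat.{u} R) ↔
      (∀ M : ModuleCat.{u} R, Module.Projective R M → idim R M ≠ ⊤) ∧
        ∀ M : ModuleCat.{u} R, Module.Injective R M → pdim R M ≠ ⊤ :=
  and_congr
    (forall_congr' fun P => imp_congr (IsProjective.iff_projective P).symm idim_ne_top_iff.symm)
    (forall_congr' fun I =>
      imp_congr (Module.injective_iff_injective_object R I).symm pdim_ne_top_iff.symm)

end Modules

section Statement

variable {R A : Type u} [Ring R] [Ring A]

theorem stmt9_general (ι : R →+* A) (hF : IsFrobeniusExtension ι)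
    (hι : (ModuleCat.coextendScalars.{u, u, u} ι).Faithful) :
    ((∀ M : ModuleCat.{u} A, Module.Projective A M → idim A M ≠ ⊤) ∧
      (∀ M : ModuleCat.{u} A, Module.Injective A M → pdim A M ≠ ⊤)) ↔
    ((∀ M : ModuleCat.{u} R, Module.Projective R M → idim R M ≠ ⊤) ∧
      (∀ M : ModuleCat.{u} R, Module.Injective R M → pdim R M ≠ ⊤)) := by
  obtain ⟨-, τ, n, x, y, hτ_left, hτ_right, hx, hy⟩ := hF
  let 𝓕 : FrobeniusSystem ι (Fin n) := ⟨τ, x, y, hτ_left, hτ_right, hx, hy⟩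
  rw [← isGorensteinRegular_moduleCat_iff, ← isGorensteinRegular_moduleCat_iff]
  exact isGorensteinRegular_iff_of_faithful (ModuleCat.restrictCoextendScalarsAdj.{u} ι)
    𝓕.coextendRestrictScalarsAdj

theorem stmt9 (ι : R →+* A) (hF : IsFrobeniusExtension ι) (hS : IsSplitExtension ι) :
    ((∀ M : ModuleCat.{u} A, Module.Projective A M → idim A M ≠ ⊤) ∧
      (∀ M : ModuleCat.{u} A, Module.Injective A M → pdim A M ≠ ⊤)) ↔
    ((∀ M : ModuleCat.{u} R, Module.Projective R M → idim R M ≠ ⊤) ∧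
      (∀ M : ModuleCat.{u} R, Module.Injective R M → pdim R M ≠ ⊤)) := by
  obtain ⟨π, hπ, -, hπι⟩ := hS
  exact stmt9_general ι hF (faithful_coextendScalars hπ (by rw [← map_one ι, hπι]))

end Statement
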